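/- Let q be a nonzero polynomial, c > 0, φ(t) = exp(-ct²), I a compact interval, and Λ a sequence of distinct reals with ∑_{λ ∈ Λ, λ≠0} 1/|λ| = ∞. Then the system of translates {q(·−λ)φ(·−λ) : λ ∈ Λ}, restricted to I, has dense linear span in C(I). -/

import Mathlib

/-!
By the Hahn-Banach theorem it suffices that a functional `L` vanishing on the translates at the
points of `Λ` is zero. For a polynomial `p` let `W_p z` be the value of `L` at the translate by the
complex number `z` of `p φ`. Expanding the square in the Gaussian shows that the entire function
`exp (c z²) W_p z` grows at most like a power of `|z|` times `exp (K |re z|)`. Dividing out the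
zeros by Blaschke factors in the half-planes `re z > 0` and `re z < 0`, one sees that the real zeros
of a nonzero function of this kind have a convergent sum of reciprocals, so `W_q = 0`.

Let `N` be the space of all `p` with `W_p = 0`, and let `T p = 2 c X p - p'`, so that the derivative
of `W_p` is `W_{T p}`. Thus `T` maps `N` into itself. Conversely, if `T p - b p` lies in `N`, then
`W_p` is a multiple of `exp (b z)`, and multiplied by `exp (c z²)` this violates the growth bound
unless it vanishes, so that `p` lies in `N`. Every polynomial is `r(T) 1` for some polynomial `r`;
splitting `r` into linear factors for `q = r(T) 1` gives first `1 ∈ N` and then `N = ℂ[X]`. Hence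
`L` kills `p φ` for every polynomial `p`, and it is zero by the Weierstrass theorem.
-/

open Filter Topology Asymptotics Bornology Polynomial ComplexConjugate

section HalfPlane

/-- Membership in the ball of radius `M` of the Hardy space `H^∞` of the right half-plane, for
functions that extend continuously to the imaginary axis. -/
structure BoundedOnRightHalfPlane (f : ℂ → ℂ) (M : ℝ) : Prop where
  diffContOnCl : DiffContOnCl ℂ f {z | 0 < z.re}
  norm_le : ∀ ⦃z : ℂ⦄, 0 ≤ z.re → ‖f z‖ ≤ M

/-- The function `f` divided by the Blaschke factor `(z - a) / (z + conj a)` of the right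
half-plane; it is meant for `f a = 0`, and `dslope` fills in the removable singularity at `a`. -/
noncomputable def blaschkeQuotient (f : ℂ → ℂ) (a z : ℂ) : ℂ :=
  (z + conj a) * dslope f a z

variable {f : ℂ → ℂ} {M : ℝ} {a z : ℂ}

theorem BoundedOnRightHalfPlane.of_eventually_cobounded (hf : DiffContOnCl ℂ f {z | 0 < z.re})
    {K : ℝ} (hK : ∀ᶠ z in cobounded ℂ, 0 < z.re → ‖f z‖ ≤ K)
    (him : ∀ x : ℝ, ‖f (x * Complex.I)‖ ≤ M) : BoundedOnRightHalfPlane f M := by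
  refine ⟨hf, fun z hz ↦ PhragmenLindelof.right_half_plane_of_bounded_on_real hf ?_ ?_ him hz⟩
  · refine ⟨1, one_lt_two, 0, .of_bound K ?_⟩
    rw [eventually_inf_principal]
    simpa using hK
  · refine ⟨K, eventually_map.2 ?_⟩
    filter_upwards [(RCLike.tendsto_ofReal_atTop_cobounded ℂ).eventually hK, eventually_gt_atTop 0]
      with x hx hx0
    exact hx (by simpa using hx0)

theorem sub_mul_blaschkeQuotient (hfa : f a = 0) (z : ℂ) :
    (z - a) * blaschkeQuotient f a z = (z + conj a) * f z := by
  rw [blaschkeQuotient, mul_left_comm, ← smul_eq_mul (z - a), sub_smul_dslope, hfa, sub_zero]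

theorem norm_blaschkeQuotient (hfa : f a = 0) (hz : z ≠ a) :
    ‖blaschkeQuotient f a z‖ = ‖z + conj a‖ / ‖z - a‖ * ‖f z‖ := by
  rw [div_mul_eq_mul_div, eq_div_iff (norm_ne_zero_iff.2 (sub_ne_zero.2 hz)), mul_comm, ← norm_mul,
    sub_mul_blaschkeQuotient hfa, norm_mul]

theorem diffContOnCl_blaschkeQuotient (hf : DiffContOnCl ℂ f {z | 0 < z.re})
    (ha : 0 < a.re) : DiffContOnCl ℂ (blaschkeQuotient f a) {z | 0 < z.re} := by
  have hnhds : {z : ℂ | 0 < z.re} ∈ 𝓝 a :=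
    (isOpen_lt continuous_const Complex.continuous_re).mem_nhds ha
  have hslope : DiffContOnCl ℂ (dslope f a) {z | 0 < z.re} :=
    ⟨(Complex.differentiableOn_dslope hnhds).2 hf.1,
      (continuousOn_dslope (mem_of_superset hnhds subset_closure)).2
        ⟨hf.2, hf.1.differentiableAt hnhds⟩⟩
  exact (differentiable_id.add_const (conj a)).diffContOnCl.smul hslope

theorem norm_add_conj_eq_norm_sub (hz : z.re = 0) : ‖z + conj a‖ = ‖z - a‖ := by
  rw [Complex.norm_def, Complex.norm_def]
  simp [Complex.normSq_apply, hz, sub_eq_add_neg]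

theorem norm_add_conj_div_norm_sub_le (ha : 0 < a.re) (hz : a.re ≤ ‖z - a‖) :
    ‖z + conj a‖ / ‖z - a‖ ≤ 3 := by
  rw [div_le_iff₀ (ha.trans_le hz)]
  calc ‖z + conj a‖ = ‖(z - a) + (2 * a.re : ℝ)‖ := by rw [← Complex.add_conj]; ring_nf
    _ ≤ ‖z - a‖ + 2 * a.re := by
      grw [norm_add_le, Complex.norm_real, Real.norm_of_nonneg (by positivity)]
    _ ≤ 3 * ‖z - a‖ := by linarith

theorem BoundedOnRightHalfPlane.blaschkeQuotient (hf : BoundedOnRightHalfPlane f M)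
    (ha : 0 < a.re) (hfa : f a = 0) : BoundedOnRightHalfPlane (blaschkeQuotient f a) M := by
  refine .of_eventually_cobounded (diffContOnCl_blaschkeQuotient hf.diffContOnCl ha)
    (K := 3 * M) ?_ fun x ↦ ?_
  · filter_upwards [(Metric.tendsto_dist_right_cobounded_atTop a).eventually_ge_atTop a.re]
      with z hz hz0
    rw [dist_eq_norm] at hz
    have hza : z ≠ a := sub_ne_zero.1 (norm_pos_iff.1 (ha.trans_le hz))
    rw [norm_blaschkeQuotient hfa hza]
    exact mul_le_mul (norm_add_conj_div_norm_sub_le ha hz) (hf.norm_le hz0.le) (norm_nonneg _)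
      (by norm_num)
  · have hxa : (x * Complex.I : ℂ) ≠ a := fun h ↦ by simp [← h] at ha
    rw [norm_blaschkeQuotient hfa hxa, norm_add_conj_eq_norm_sub (by simp),
      div_self (norm_ne_zero_iff.2 (sub_ne_zero.2 hxa)), one_mul]
    exact hf.norm_le (by simp)

theorem add_conj_ne_zero (ha : 0 < a.re) (hz : 0 ≤ z.re) : z + conj a ≠ 0 := fun h ↦ by
  have := congrArg Complex.re h
  simp only [Complex.add_re, Complex.conj_re, Complex.zero_re] at this
  linarith

theorem BoundedOnRightHalfPlane.norm_le_mul_prod (hf : BoundedOnRightHalfPlane f M) (S : Finset ℂ)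
    (hS : ∀ a ∈ S, 0 < a.re ∧ f a = 0) (hz : 0 ≤ z.re) :
    ‖f z‖ ≤ M * ∏ a ∈ S, ‖z - a‖ / ‖z + conj a‖ := by
  induction S using Finset.induction_on generalizing f with
  | empty => simpa using hf.norm_le hz
  | insert a S haS ih =>
    obtain ⟨⟨ha, hfa⟩, hS⟩ := (Finset.forall_mem_insert _ _ _).1 hS
    have hzeros : ∀ b ∈ S, 0 < b.re ∧ _root_.blaschkeQuotient f a b = 0 := fun b hb ↦ by
      have hba : b - a ≠ 0 := sub_ne_zero.2 fun h ↦ haS (h ▸ hb)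
      have := sub_mul_blaschkeQuotient hfa b
      rw [(hS b hb).2, mul_zero] at this
      exact ⟨(hS b hb).1, (mul_eq_zero.1 this).resolve_left hba⟩
    have hden : ‖z + conj a‖ ≠ 0 := norm_ne_zero_iff.2 (add_conj_ne_zero ha hz)
    calc ‖f z‖ = ‖z - a‖ / ‖z + conj a‖ * ‖_root_.blaschkeQuotient f a z‖ := by
          rw [div_mul_eq_mul_div, eq_div_iff hden, mul_comm, ← norm_mul, ← norm_mul,
            sub_mul_blaschkeQuotient hfa]
      _ ≤ ‖z - a‖ / ‖z + conj a‖ * (M * ∏ b ∈ S, ‖z - b‖ / ‖z + conj b‖) := by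
          gcongr
          exact ih (hf.blaschkeQuotient ha hfa) hzeros
      _ = M * ∏ b ∈ insert a S, ‖z - b‖ / ‖z + conj b‖ := by
          rw [Finset.prod_insert haS]; ring

theorem norm_sub_div_norm_add_conj_le (ha : 0 < a.re) (hz : 0 ≤ z.re) :
    ‖z - a‖ / ‖z + conj a‖ ≤ Real.exp (-(2 * z.re * (a.re / ‖z + conj a‖ ^ 2))) := by
  have hden : ‖z + conj a‖ ≠ 0 := norm_ne_zero_iff.2 (add_conj_ne_zero ha hz)
  have hsq : ‖z - a‖ ^ 2 = ‖z + conj a‖ ^ 2 - 4 * z.re * a.re := by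
    simp only [Complex.sq_norm, Complex.normSq_apply, Complex.sub_re, Complex.sub_im,
      Complex.add_re, Complex.add_im, Complex.conj_re, Complex.conj_im]
    ring
  refine (sq_le_sq₀ (by positivity) (Real.exp_nonneg _)).1 ?_
  calc (‖z - a‖ / ‖z + conj a‖) ^ 2 = -(4 * z.re * (a.re / ‖z + conj a‖ ^ 2)) + 1 := by
        rw [div_pow, hsq]; field_simp; ring
    _ ≤ Real.exp (-(4 * z.re * (a.re / ‖z + conj a‖ ^ 2))) := Real.add_one_le_exp _
    _ = Real.exp (-(2 * z.re * (a.re / ‖z + conj a‖ ^ 2))) ^ 2 := by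
        rw [← Real.exp_nat_mul]; push_cast; ring_nf

theorem BoundedOnRightHalfPlane.summable_zeros (hf : BoundedOnRightHalfPlane f M)
    (hz : 0 < z.re) (hfz : f z ≠ 0) :
    Summable fun a : {a : ℂ // 0 < a.re ∧ f a = 0} ↦ a.1.re / ‖z + conj a.1‖ ^ 2 := by
  have hpos : 0 < ‖f z‖ := norm_pos_iff.2 hfz
  have hM : 0 < M := hpos.trans_le (hf.norm_le hz.le)
  refine summable_of_sum_le (c := Real.log (M / ‖f z‖) / (2 * z.re))
    (fun a ↦ div_nonneg a.2.1.le (by positivity)) fun s ↦ ?_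
  have hprod := hf.norm_le_mul_prod (s.map (.subtype _)) (by simp +contextual) hz.le
  rw [Finset.prod_map] at hprod
  have hexp : ‖f z‖ ≤ M * Real.exp (-(2 * z.re * ∑ a ∈ s, a.1.re / ‖z + conj a.1‖ ^ 2)) := by
    rw [Finset.mul_sum, ← Finset.sum_neg_distrib, Real.exp_sum]
    refine hprod.trans ?_
    gcongr with a
    exact norm_sub_div_norm_add_conj_le a.2.1 hz.le
  rw [le_div_iff₀ (by positivity), mul_comm, Real.le_log_iff_exp_le (by positivity),
    le_div_iff₀ hpos]
  rwa [Real.exp_neg, ← div_eq_mul_inv, le_div_iff₀ (Real.exp_pos _), mul_comm] at hexp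

end HalfPlane

section RealZeros

variable {F : ℂ → ℂ} {C K : ℝ} {d : ℕ}

theorem one_add_norm_le_two_mul_norm_one_add {z : ℂ} (hz : 0 ≤ z.re) :
    1 + ‖z‖ ≤ 2 * ‖1 + z‖ := by
  have hone : 1 ≤ ‖1 + z‖ := by
    have := Complex.re_le_norm (1 + z)
    simp only [Complex.add_re, Complex.one_re] at this
    linarith
  have hnorm : ‖z‖ ≤ ‖1 + z‖ := by
    refine (sq_le_sq₀ (norm_nonneg _) (norm_nonneg _)).1 ?_
    simp only [Complex.sq_norm, Complex.normSq_apply, Complex.add_re, Complex.add_im,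
      Complex.one_re, Complex.one_im]
    nlinarith
  linarith

theorem boundedOnRightHalfPlane_mul_cexp_div_pow (hF : DiffContOnCl ℂ F {z | 0 < z.re})
    (hb : ∀ z : ℂ, 0 ≤ z.re → ‖F z‖ ≤ C * (1 + ‖z‖) ^ d * Real.exp (K * z.re)) :
    BoundedOnRightHalfPlane (fun z ↦ F z * Complex.exp (-K * z) / (1 + z) ^ d) (C * 2 ^ d) := by
  have hden : ∀ z : ℂ, 0 ≤ z.re → 0 < ‖1 + z‖ := fun z hz ↦ by
    linarith [one_add_norm_le_two_mul_norm_one_add hz, norm_nonneg z]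
  have hC : 0 ≤ C := by simpa using (norm_nonneg _).trans (hb 0 le_rfl)
  refine ⟨?_, fun z hz ↦ ?_⟩
  · have hexp : Differentiable ℂ fun z : ℂ ↦ Complex.exp (-K * z) := by fun_prop
    have hpow : Differentiable ℂ fun z : ℂ ↦ (1 + z) ^ d := by fun_prop
    have hclosure : closure {z : ℂ | 0 < z.re} = {z | 0 ≤ z.re} := Complex.closure_setOfPred_lt_re 0
    simp only [div_eq_mul_inv]
    refine (hF.smul hexp.diffContOnCl).smul (hpow.diffContOnCl.inv fun z hz ↦ pow_ne_zero d ?_)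
    rw [hclosure] at hz
    exact norm_pos_iff.1 (hden z hz)
  · have hexp : ‖Complex.exp (-K * z)‖ = (Real.exp (K * z.re))⁻¹ := by
      simp [Complex.norm_exp, Real.exp_neg]
    rw [norm_div, norm_mul, norm_pow, hexp, div_le_iff₀ (pow_pos (hden z hz) d),
      ← div_eq_mul_inv, div_le_iff₀ (Real.exp_pos _), mul_assoc C, ← mul_pow]
    grw [hb z hz, one_add_norm_le_two_mul_norm_one_add hz]

theorem summable_inv_zeros_gt_one (hF : DiffContOnCl ℂ F {z | 0 < z.re})
    (hb : ∀ z : ℂ, 0 ≤ z.re → ‖F z‖ ≤ C * (1 + ‖z‖) ^ d * Real.exp (K * z.re))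
    {z : ℂ} (hz : 0 < z.re) (hFz : F z ≠ 0) :
    Summable fun x : {x : ℝ // 1 < x ∧ F x = 0} ↦ x.1⁻¹ := by
  have hden : (1 + z) ^ d ≠ 0 := pow_ne_zero d <| norm_pos_iff.1 <| by
    linarith [one_add_norm_le_two_mul_norm_one_add hz.le, norm_nonneg z]
  have hsum := (boundedOnRightHalfPlane_mul_cexp_div_pow hF hb).summable_zeros hz
    (div_ne_zero (mul_ne_zero hFz (Complex.exp_ne_zero _)) hden)
  let toZero (x : {x : ℝ // 1 < x ∧ F x = 0}) :
      {a : ℂ // 0 < a.re ∧ F a * Complex.exp (-K * a) / (1 + a) ^ d = 0} :=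
    ⟨x, one_pos.trans x.2.1, by simp [x.2.2]⟩
  have hinj : Function.Injective toZero := fun x y h ↦
    Subtype.ext (Complex.ofReal_injective (congrArg Subtype.val h))
  refine .of_nonneg_of_le (fun x ↦ inv_nonneg.2 (one_pos.trans x.2.1).le) (fun x ↦ ?_)
    ((hsum.comp_injective hinj).mul_left ((1 + ‖z‖) ^ 2))
  obtain ⟨x, hx1, hx0⟩ := x
  have hx : 0 < x := one_pos.trans hx1
  have hpos : 0 < ‖z + conj (x : ℂ)‖ := norm_pos_iff.2 (add_conj_ne_zero (by simpa) hz.le)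
  have hle : ‖z + conj (x : ℂ)‖ ≤ (1 + ‖z‖) * x := by
    grw [norm_add_le, Complex.conj_ofReal, Complex.norm_of_nonneg hx.le]
    nlinarith [norm_nonneg z]
  change x⁻¹ ≤ (1 + ‖z‖) ^ 2 * (x / ‖z + conj (x : ℂ)‖ ^ 2)
  rw [← mul_div_assoc, le_div_iff₀ (by positivity), inv_mul_le_iff₀ hx]
  calc ‖z + conj (x : ℂ)‖ ^ 2 ≤ ((1 + ‖z‖) * x) ^ 2 := by gcongr
    _ = x * ((1 + ‖z‖) ^ 2 * x) := by ring

theorem finite_zeros_inter_of_isCompact (hF : Differentiable ℂ F) (hF0 : F ≠ 0) {s : Set ℂ}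
    (hs : IsCompact s) : (s ∩ {z | F z = 0}).Finite := by
  by_contra hinf
  obtain ⟨w, -, hw⟩ := Set.Infinite.exists_accPt_of_subset_isCompact hinf hs Set.inter_subset_left
  have hfreq : ∃ᶠ z in 𝓝[≠] w, F z = 0 :=
    (accPt_iff_frequently_nhdsNE.1 hw).mono fun _ hz ↦ hz.2
  have hnhd : AnalyticOnNhd ℂ F Set.univ := hF.differentiableOn.analyticOnNhd isOpen_univ
  exact hF0 <| funext fun z ↦ hnhd.eqOn_zero_of_preconnected_of_frequently_eq_zero
    isPreconnected_univ (Set.mem_univ w) hfreq (Set.mem_univ z)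

theorem exists_re_pos_ne_zero (hF : Differentiable ℂ F) (hF0 : F ≠ 0) :
    ∃ z : ℂ, 0 < z.re ∧ F z ≠ 0 := by
  by_contra! hzero
  have hone : {z : ℂ | 0 < z.re} ∈ 𝓝 1 :=
    (isOpen_lt continuous_const Complex.continuous_re).mem_nhds (by simp)
  exact hF0 <| AnalyticOnNhd.eq_of_eventuallyEq (z₀ := 1)
    (hF.differentiableOn.analyticOnNhd isOpen_univ)
    (analyticOnNhd_const : AnalyticOnNhd ℂ (0 : ℂ → ℂ) _) (mem_of_superset hone hzero)

theorem summable_inv_abs_real_zeros (hF : Differentiable ℂ F) (hF0 : F ≠ 0)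
    (hb : ∀ z : ℂ, ‖F z‖ ≤ C * (1 + ‖z‖) ^ d * Real.exp (K * |z.re|)) :
    Summable fun x : {x : ℝ // F x = 0} ↦ |x.1|⁻¹ := by
  have hsplit (x : ℝ) : |x|⁻¹ ≤ (if 1 < x then x⁻¹ else 0) + (if 1 < -x then (-x)⁻¹ else 0) +
      if |x| ≤ 1 then |x|⁻¹ else 0 := by
    rcases abs_cases x with ⟨h, h'⟩ | ⟨h, h'⟩ <;> rw [h] <;> grind
  have hlarge {G : ℂ → ℂ} (hG : Differentiable ℂ G) (hG0 : G ≠ 0)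
      (hGb : ∀ z : ℂ, ‖G z‖ ≤ C * (1 + ‖z‖) ^ d * Real.exp (K * |z.re|)) :
      Summable (Set.indicator {x : ℝ | 1 < x ∧ G x = 0} fun x ↦ x⁻¹) := by
    obtain ⟨z, hz, hGz⟩ := exists_re_pos_ne_zero hG hG0
    have hGb' (w : ℂ) (hw : 0 ≤ w.re) : ‖G w‖ ≤ C * (1 + ‖w‖) ^ d * Real.exp (K * w.re) := by
      simpa only [abs_of_nonneg hw] using hGb w
    exact summable_subtype_iff_indicator.1 (summable_inv_zeros_gt_one hG.diffContOnCl hGb' hz hGz)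
  have hneg0 : (fun z ↦ F (-z)) ≠ 0 := fun h ↦ hF0 <| funext fun z ↦ by simpa using congrFun h (-z)
  have hpos := hlarge hF hF0 hb
  have hneg := (Equiv.neg ℝ).summable_iff.2 <|
    hlarge (hF.comp differentiable_neg) hneg0 fun z ↦ by simpa using hb (-z)
  have hfin : {x : ℝ | |x| ≤ 1 ∧ F x = 0}.Finite :=
    ((finite_zeros_inter_of_isCompact hF hF0 (isCompact_closedBall 0 1)).preimage
      Complex.ofReal_injective.injOn).subset fun x hx ↦ by simpa using hx
  have hsmall : Summable (Set.indicator {x : ℝ | |x| ≤ 1 ∧ F x = 0} fun x ↦ |x|⁻¹) :=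
    summable_of_hasFiniteSupport (hfin.subset Set.support_indicator_subset)
  refine .of_nonneg_of_le (fun x ↦ by positivity) ?_
    (((hpos.add hneg).add hsmall).subtype {x : ℝ | F x = 0})
  rintro ⟨x, hx⟩
  simpa [Set.indicator_apply, hx] using hsplit x

end RealZeros

section RaisingOp

/-- The raising operator of the Hermite family attached to the weight `exp (-a * X ^ 2 / 2)`:
the operator `p ↦ a X p - p'`. -/
noncomputable def raisingOp {R : Type*} [CommRing R] (a : R) : Module.End R R[X] :=
  LinearMap.mulLeft R (C a * X) - derivative

theorem raisingOp_apply {R : Type*} [CommRing R] (a : R) (p : R[X]) :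
    raisingOp a p = C a * X * p - derivative p := rfl

variable {K : Type*} [Field K] {a : K}

theorem eq_top_of_one_mem_of_le_comap_raisingOp (ha : a ≠ 0) {N : Submodule K K[X]} (hone : 1 ∈ N)
    (hN : N ≤ N.comap (raisingOp a)) : N = ⊤ := by
  have hX (n : ℕ) : (X ^ n : K[X]) ∈ N := by
    induction n using Nat.strong_induction_on with
    | _ n ih =>
      rcases n with _ | n
      · simpa using hone
      · have hrec : (X ^ (n + 1) : K[X]) =
            a⁻¹ • (raisingOp a (X ^ n) + (n : K) • X ^ (n - 1)) := by
          rw [eq_inv_smul_iff₀ ha, raisingOp_apply, derivative_X_pow, smul_eq_C_mul, smul_eq_C_mul]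
          ring
        rw [hrec]
        exact N.smul_mem _ (N.add_mem (hN (ih n n.lt_succ_self)) (N.smul_mem _ (ih _ (by lia))))
  refine Submodule.eq_top_iff'.2 fun p ↦ ?_
  rw [p.as_sum_range_C_mul_X_pow]
  exact N.sum_mem fun n _ ↦ smul_eq_C_mul (p.coeff n) ▸ N.smul_mem _ (hX n)

theorem exists_aeval_raisingOp_one_eq (ha : a ≠ 0) (p : K[X]) :
    ∃ r : K[X], aeval (raisingOp a) r 1 = p := by
  let S : Submodule K K[X] :=
    LinearMap.range (LinearMap.applyₗ 1 ∘ₗ (aeval (raisingOp a)).toLinearMap)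
  have hS : S = ⊤ := by
    refine eq_top_of_one_mem_of_le_comap_raisingOp ha ⟨1, by simp⟩ ?_
    rintro _ ⟨r, rfl⟩
    exact ⟨X * r, by simp⟩
  exact (hS ▸ Submodule.mem_top : p ∈ S)

theorem mem_of_aeval_apply_mem [IsAlgClosed K] {V : Type*} [AddCommGroup V] [Module K V]
    {T : Module.End K V} {N : Submodule K V} (hN : ∀ b : K, N.comap (T - algebraMap K _ b) ≤ N)
    {r : K[X]} (hr : r ≠ 0) {v : V} (hv : aeval T r v ∈ N) : v ∈ N := by
  induction hn : r.natDegree generalizing r with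
  | zero =>
    obtain ⟨b, rfl⟩ := natDegree_eq_zero.1 hn
    have hb : b ≠ 0 := by simpa using hr
    rwa [aeval_C, Module.algebraMap_end_apply, N.smul_mem_iff hb] at hv
  | succ n ih =>
    obtain ⟨b, hb⟩ := IsAlgClosed.exists_root r
      (degree_ne_of_natDegree_ne (hn.trans_ne n.succ_ne_zero))
    obtain ⟨s, rfl⟩ := dvd_iff_isRoot.2 hb
    have hs : s ≠ 0 := right_ne_zero_of_mul hr
    rw [natDegree_mul (X_sub_C_ne_zero b) hs, natDegree_X_sub_C] at hn
    exact ih hs (hN b (by simpa using hv)) (by lia)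

theorem eq_top_of_le_comap_raisingOp_of_comap_le [IsAlgClosed K] (ha : a ≠ 0)
    {N : Submodule K K[X]} (hmap : N ≤ N.comap (raisingOp a))
    (hcomap : ∀ b : K, N.comap (raisingOp a - algebraMap K _ b) ≤ N)
    {q : K[X]} (hq : q ≠ 0) (hqN : q ∈ N) : N = ⊤ := by
  obtain ⟨r, rfl⟩ := exists_aeval_raisingOp_one_eq ha q
  have hr : r ≠ 0 := by rintro rfl; simp at hq
  exact eq_top_of_one_mem_of_le_comap_raisingOp ha (mem_of_aeval_apply_mem hcomap hr hqN) hmap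

end RaisingOp

section PolyGauss

theorem hasDerivAt_aeval_comp {𝕜 𝔸 : Type*} [NontriviallyNormedField 𝕜] [NormedCommRing 𝔸]
    [NormedAlgebra 𝕜 𝔸] {y : 𝕜 → 𝔸} {y' : 𝔸} {z : 𝕜} (hy : HasDerivAt y y' z) (p : 𝕜[X]) :
    HasDerivAt (fun z ↦ aeval (y z) p) (aeval (y z) (derivative p) * y') z := by
  induction p using Polynomial.induction_on' with
  | add p q hp hq => simpa [add_mul] using! hp.add hq
  | monomial n a =>
    simp only [← C_mul_X_pow_eq_monomial, ← smul_eq_C_mul, map_smul, map_pow, aeval_X]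
    convert! (hy.pow n).const_smul a using 1
    simp [derivative_X_pow]

variable {𝔸 : Type*} [NormedCommRing 𝔸] [NormedAlgebra ℂ 𝔸]

/-- The translate `p (τ - z) * exp (-c * (τ - z) ^ 2)` by `z` of a polynomial multiple of a
Gaussian, evaluated at an element `τ` of a Banach algebra; on `C(I)` the element `τ` is the identity
function. It is bundled as a linear map in `p`. -/
noncomputable def polyGauss (c : ℂ) (τ : 𝔸) (z : ℂ) : ℂ[X] →ₗ[ℂ] 𝔸 :=
  LinearMap.mulRight ℂ (NormedSpace.exp (-c • (τ - algebraMap ℂ 𝔸 z) ^ 2)) ∘ₗ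
    (aeval (τ - algebraMap ℂ 𝔸 z)).toLinearMap

theorem polyGauss_apply (c : ℂ) (τ : 𝔸) (z : ℂ) (p : ℂ[X]) :
    polyGauss c τ z p = aeval (τ - algebraMap ℂ 𝔸 z) p *
      NormedSpace.exp (-c • (τ - algebraMap ℂ 𝔸 z) ^ 2) := rfl

variable [CompleteSpace 𝔸]

theorem hasDerivAt_polyGauss (c : ℂ) (τ : 𝔸) (p : ℂ[X]) (z : ℂ) :
    HasDerivAt (fun z ↦ polyGauss c τ z p) (polyGauss c τ z (raisingOp (2 * c) p)) z := by
  have hsub : HasDerivAt (fun z ↦ τ - algebraMap ℂ 𝔸 z) (-1) z := by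
    simpa using (Algebra.linearMap ℂ 𝔸).toContinuousLinearMap.hasDerivAt.const_sub τ
  have hsq : HasDerivAt (fun z ↦ -c • (τ - algebraMap ℂ 𝔸 z) ^ 2)
      ((2 * c) • (τ - algebraMap ℂ 𝔸 z)) z := by
    refine ((hsub.pow 2).const_smul (-c)).congr_deriv ?_
    simp only [Algebra.smul_def, map_mul, map_neg, map_ofNat]
    ring
  have hexp := (hasFDerivAt_exp (𝕂 := ℂ)).comp_hasDerivAt z hsq
  refine ((hasDerivAt_aeval_comp hsub p).mul hexp).congr_deriv ?_
  simp only [polyGauss_apply, raisingOp_apply, map_sub, map_mul, aeval_C, aeval_X,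
    Algebra.smul_def, smul_apply, one_apply_eq_self, Function.comp_apply, Algebra.algebraMap_self,
    RingHom.id_apply]
  ring

theorem cexp_smul_polyGauss (c : ℂ) (τ : 𝔸) (z : ℂ) (p : ℂ[X]) :
    Complex.exp (c * z ^ 2) • polyGauss c τ z p = aeval (τ - algebraMap ℂ 𝔸 z) p *
      (NormedSpace.exp (-c • τ ^ 2) * NormedSpace.exp ((2 * c * z) • τ)) := by
  let : NormedAlgebra ℚ 𝔸 := .restrictScalars ℚ ℂ 𝔸
  rw [polyGauss_apply, Algebra.smul_def, Complex.exp_eq_exp_ℂ, NormedSpace.algebraMap_exp_comm,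
    mul_left_comm, ← NormedSpace.exp_add, ← NormedSpace.exp_add]
  congr 2
  simp only [Algebra.smul_def, map_mul, map_pow, map_neg, map_ofNat]
  ring

end PolyGauss

section Exponential

theorem eq_cexp_smul_of_forall_hasDerivAt {E : Type*} [NormedAddCommGroup E] [NormedSpace ℂ E]
    {W : ℂ → E} {b : ℂ} (hW : ∀ z, HasDerivAt W (b • W z) z) (z : ℂ) :
    W z = Complex.exp (b * z) • W 0 := by
  have hconst (w : ℂ) : HasDerivAt (fun z ↦ Complex.exp (-(b * z)) • W z) 0 w := by
    have hexp : HasDerivAt (fun z ↦ Complex.exp (-(b * z))) (Complex.exp (-(b * w)) * -b) w := by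
      simpa using (((hasDerivAt_id w).const_mul b).neg).cexp
    exact (hexp.smul (hW w)).congr_deriv (by module)
  have := is_const_of_deriv_eq_zero (fun w ↦ (hconst w).differentiableAt)
    (fun w ↦ (hconst w).deriv) z 0
  rw [mul_zero, neg_zero, Complex.exp_zero, one_smul, Complex.exp_neg,
    inv_smul_eq_iff₀ (Complex.exp_ne_zero _)] at this
  exact this

theorem exists_norm_eq_one_exp_le_norm_cexp_quadratic (b : ℂ) {c : ℂ} (hc : c ≠ 0) :
    ∃ u : ℂ, ‖u‖ = 1 ∧ ∀ s : ℝ, 0 ≤ s →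
      Real.exp (‖c‖ * s ^ 2 - ‖b‖ * s) ≤ ‖Complex.exp (b * (s * u) + c * (s * u) ^ 2)‖ := by
  obtain ⟨u, hu⟩ := IsAlgClosed.exists_pow_nat_eq ((‖c‖ : ℂ) / c) two_pos
  have hu1 : ‖u‖ = 1 := by
    rw [← pow_eq_one_iff_of_nonneg (norm_nonneg u) two_ne_zero, ← norm_pow, hu]
    simp [hc]
  refine ⟨u, hu1, fun s hs ↦ ?_⟩
  have hsq : c * (s * u) ^ 2 = (‖c‖ * s ^ 2 : ℝ) := by
    rw [mul_pow, hu]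
    push_cast
    field_simp
  have hlin : -(‖b‖ * s) ≤ (b * (s * u)).re := by
    refine neg_le_of_abs_le ((Complex.abs_re_le_norm _).trans_eq ?_)
    rw [norm_mul, norm_mul, hu1, mul_one, Complex.norm_of_nonneg hs]
  rw [Complex.norm_exp, Complex.add_re, hsq, Complex.ofReal_re]
  exact Real.exp_le_exp.2 (by linarith)

theorem nonpos_of_mul_norm_cexp_quadratic_le {b c : ℂ} (hc : c ≠ 0) {C k m : ℝ} {d : ℕ}
    (h : ∀ z : ℂ, m * ‖Complex.exp (b * z + c * z ^ 2)‖ ≤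
      C * (1 + ‖z‖) ^ d * Real.exp (k * ‖z‖)) : m ≤ 0 := by
  by_contra! hm
  have hC : 0 ≤ C := hm.le.trans (by simpa using h 0)
  obtain ⟨u, hu, hlower⟩ := exists_norm_eq_one_exp_le_norm_cexp_quadratic b hc
  have hbound (s : ℝ) (hs : 0 ≤ s) :
      m ≤ C * Real.exp (s * ((d + k + ‖b‖) - ‖c‖ * s)) := by
    have hz : ‖(s : ℂ) * u‖ = s := by rw [norm_mul, hu, mul_one, Complex.norm_of_nonneg hs]
    have hpow : (1 + s) ^ d ≤ Real.exp (d * s) := by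
      rw [Real.exp_nat_mul, add_comm]
      gcongr
      exact Real.add_one_le_exp s
    have hline : m * Real.exp (‖c‖ * s ^ 2 - ‖b‖ * s) ≤
        C * Real.exp (d * s) * Real.exp (k * s) := by
      have := h (s * u)
      rw [hz] at this
      grw [hlower s hs, this, hpow]
    rw [← le_div_iff₀ (Real.exp_pos _), mul_assoc, mul_div_assoc, ← Real.exp_add,
      ← Real.exp_sub] at hline
    exact hline.trans_eq (by ring_nf)
  have hlim : Tendsto (fun s : ℝ ↦ C * Real.exp (s * ((d + k + ‖b‖) - ‖c‖ * s))) atTop (𝓝 0) := by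
    rw [← mul_zero C]
    refine (Real.tendsto_exp_atBot.comp (tendsto_id.atTop_mul_atBot₀ ?_)).const_mul C
    exact tendsto_const_nhds.add_atBot
      (tendsto_neg_atTop_atBot.comp (tendsto_id.const_mul_atTop (norm_pos_iff.2 hc)))
  exact hm.not_ge (ge_of_tendsto hlim ((eventually_ge_atTop 0).mono hbound))

end Exponential

section CStar

theorem norm_exp_smul_le_of_isSelfAdjoint {𝔸 : Type*} [CStarAlgebra 𝔸] {τ : 𝔸}
    (hτ : IsSelfAdjoint τ) (w : ℂ) : ‖NormedSpace.exp (w • τ)‖ ≤ Real.exp (|w.re| * ‖τ‖) := by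
  nontriviality 𝔸
  have hnormal : IsStarNormal (w • τ) := hτ.isStarNormal.smul w
  rw [← CFC.complex_exp_eq_normedSpace_exp]
  refine norm_cfc_le (Real.exp_nonneg _) fun x hx ↦ ?_
  rw [spectrum.smul_eq_smul w τ (spectrum.nonempty τ)] at hx
  obtain ⟨y, hy, rfl⟩ := hx
  rw [Complex.norm_exp, hτ.mem_spectrum_eq_re hy]
  have hre : |y.re| ≤ ‖τ‖ := (Complex.abs_re_le_norm y).trans (spectrum.norm_le_norm_of_mem hy)
  refine Real.exp_le_exp.2 ((le_abs_self _).trans ?_)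
  simp only [smul_eq_mul, Complex.re_mul_ofReal, abs_mul]
  gcongr

theorem exists_norm_aeval_le {𝕜 𝔸 : Type*} [NormedField 𝕜] [NormedRing 𝔸] [NormOneClass 𝔸]
    [NormedAlgebra 𝕜 𝔸] (p : 𝕜[X]) :
    ∃ C, 0 ≤ C ∧ ∀ y : 𝔸, ‖aeval y p‖ ≤ C * (1 + ‖y‖) ^ p.natDegree := by
  refine ⟨∑ i ∈ Finset.range (p.natDegree + 1), ‖p.coeff i‖, by positivity, fun y ↦ ?_⟩
  rw [aeval_eq_sum_range, Finset.sum_mul]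
  refine norm_sum_le_of_le _ fun i hi ↦ ?_
  have hi : i ≤ p.natDegree := Finset.mem_range_succ_iff.1 hi
  calc ‖p.coeff i • y ^ i‖ ≤ ‖p.coeff i‖ * ‖y‖ ^ i := by
        grw [norm_smul, norm_pow_le]
    _ ≤ ‖p.coeff i‖ * (1 + ‖y‖) ^ p.natDegree := by
        grw [← hi, ← le_add_of_nonneg_left zero_le_one]
        linarith [norm_nonneg y]

end CStar

section Density

theorem topologicalClosure_eq_top_of_forall_dual {𝕜 E : Type*} [RCLike 𝕜]
    [NormedAddCommGroup E] [NormedSpace 𝕜 E] {S : Submodule 𝕜 E}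
    (h : ∀ L : StrongDual 𝕜 E, (∀ x ∈ S, L x = 0) → L = 0) : S.topologicalClosure = ⊤ := by
  refine Submodule.eq_top_iff'.2 fun x ↦ ?_
  have hclosed : IsClosed (S.topologicalClosure : Set E) := S.isClosed_topologicalClosure
  rw [← Submodule.Quotient.mk_eq_zero]
  refine SeparatingDual.eq_zero_of_forall_dual_eq_zero (R := 𝕜) fun f ↦ ?_
  have hL := h (f ∘L S.topologicalClosure.mkQL) fun y hy ↦ by
    simp [(Submodule.Quotient.mk_eq_zero _).2 (S.le_topologicalClosure hy)]
  exact DFunLike.congr_fun hL x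

variable {𝔸 : Type*} [CommCStarAlgebra 𝔸] {c : ℝ} {τ : 𝔸}

theorem exists_norm_cexp_smul_polyGauss_le (c : ℝ) (hτ : IsSelfAdjoint τ) (p : ℂ[X]) :
    ∃ C, ∀ z : ℂ, ‖Complex.exp (c * z ^ 2) • polyGauss (c : ℂ) τ z p‖ ≤
      C * (1 + ‖z‖) ^ p.natDegree * Real.exp (2 * |c| * ‖τ‖ * |z.re|) := by
  cases subsingleton_or_nontrivial 𝔸
  · exact ⟨0, fun z ↦ by simp [Subsingleton.elim _ (0 : 𝔸)]⟩
  obtain ⟨C, hC, hp⟩ := exists_norm_aeval_le (𝔸 := 𝔸) p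
  refine ⟨C * (1 + ‖τ‖) ^ p.natDegree * ‖NormedSpace.exp (-(c : ℂ) • τ ^ 2)‖, fun z ↦ ?_⟩
  have hbase : 1 + ‖τ - algebraMap ℂ 𝔸 z‖ ≤ (1 + ‖τ‖) * (1 + ‖z‖) := by
    grw [norm_sub_le, norm_algebraMap']
    nlinarith [mul_nonneg (norm_nonneg τ) (norm_nonneg z)]
  have hexp : ‖NormedSpace.exp ((2 * c * z) • τ)‖ ≤ Real.exp (2 * |c| * ‖τ‖ * |z.re|) := by
    refine (norm_exp_smul_le_of_isSelfAdjoint hτ _).trans_eq ?_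
    have hre : (2 * c * z).re = 2 * c * z.re := by simp
    rw [hre, abs_mul, abs_mul, abs_two, mul_right_comm]
  calc ‖Complex.exp (c * z ^ 2) • polyGauss (c : ℂ) τ z p‖
    _ ≤ C * ((1 + ‖τ‖) * (1 + ‖z‖)) ^ p.natDegree *
        (‖NormedSpace.exp (-(c : ℂ) • τ ^ 2)‖ * Real.exp (2 * |c| * ‖τ‖ * |z.re|)) := by
      grw [cexp_smul_polyGauss, norm_mul_le, norm_mul_le, hp, hbase, hexp]
    _ = _ := by
      rw [mul_pow]
      ring

/-- The polynomials `p` all of whose translates `polyGauss c τ z p`, with `z` ranging over the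
complex numbers, are annihilated by the functional `L`. -/
noncomputable def translateAnnihilator (c : ℂ) (τ : 𝔸) (L : StrongDual ℂ 𝔸) : Submodule ℂ ℂ[X] :=
  ⨅ z, LinearMap.ker (L.toLinearMap ∘ₗ polyGauss c τ z)

variable {L : StrongDual ℂ 𝔸} {p q : ℂ[X]}

theorem mem_translateAnnihilator {c : ℂ} :
    p ∈ translateAnnihilator c τ L ↔ ∀ z, L (polyGauss c τ z p) = 0 := by
  simp [translateAnnihilator]

theorem hasDerivAt_apply_polyGauss (c : ℂ) (τ : 𝔸) (L : StrongDual ℂ 𝔸) (p : ℂ[X]) (z : ℂ) :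
    HasDerivAt (fun z ↦ L (polyGauss c τ z p)) (L (polyGauss c τ z (raisingOp (2 * c) p))) z :=
  L.hasFDerivAt.comp_hasDerivAt z (hasDerivAt_polyGauss c τ p z)

theorem exists_norm_cexp_mul_apply_polyGauss_le (c : ℝ) (hτ : IsSelfAdjoint τ)
    (L : StrongDual ℂ 𝔸) (p : ℂ[X]) :
    ∃ C, ∀ z : ℂ, ‖Complex.exp (c * z ^ 2) * L (polyGauss (c : ℂ) τ z p)‖ ≤
      C * (1 + ‖z‖) ^ p.natDegree * Real.exp (2 * |c| * ‖τ‖ * |z.re|) := by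
  obtain ⟨C, hC⟩ := exists_norm_cexp_smul_polyGauss_le c hτ p
  refine ⟨‖L‖ * C, fun z ↦ ?_⟩
  rw [← smul_eq_mul, ← map_smul]
  grw [L.le_opNorm, hC z]
  exact (by ring : _ = _).le

theorem mem_translateAnnihilator_of_not_summable (hτ : IsSelfAdjoint τ) {ι : Type*} {lam : ι → ℝ}
    (hinj : Function.Injective lam) (hdiv : ¬ Summable fun i ↦ |lam i|⁻¹)
    (hL : ∀ i, L (polyGauss (c : ℂ) τ (lam i) q) = 0) : q ∈ translateAnnihilator (c : ℂ) τ L := by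
  let F : ℂ → ℂ := fun z ↦ Complex.exp (c * z ^ 2) * L (polyGauss (c : ℂ) τ z q)
  obtain ⟨C, hC⟩ := exists_norm_cexp_mul_apply_polyGauss_le c hτ L q
  have hF : Differentiable ℂ F := fun z ↦
    .mul (by fun_prop) (hasDerivAt_apply_polyGauss (c : ℂ) τ L q z).differentiableAt
  have hF0 : F = 0 := by
    by_contra hne
    let zeroAt (i : ι) : {x : ℝ // F x = 0} := ⟨lam i, by simp [F, hL i]⟩
    have hzeroAt : Function.Injective zeroAt := fun i j hij ↦ hinj congr($hij.1)
    exact hdiv ((summable_inv_abs_real_zeros hF hne hC).comp_injective hzeroAt)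
  exact mem_translateAnnihilator.2 fun z ↦
    (mul_eq_zero.1 (congr_fun hF0 z)).resolve_left (Complex.exp_ne_zero _)

theorem translateAnnihilator_le_comap_raisingOp (c : ℂ) (τ : 𝔸) (L : StrongDual ℂ 𝔸) :
    translateAnnihilator c τ L ≤ (translateAnnihilator c τ L).comap (raisingOp (2 * c)) := by
  refine fun p hp ↦ mem_translateAnnihilator.2 fun z ↦ ?_
  have hderiv := hasDerivAt_apply_polyGauss c τ L p z
  rw [funext (mem_translateAnnihilator.1 hp)] at hderiv
  exact hderiv.unique (hasDerivAt_const z 0)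

theorem comap_raisingOp_sub_le_translateAnnihilator (hc : c ≠ 0) (hτ : IsSelfAdjoint τ)
    (L : StrongDual ℂ 𝔸) (b : ℂ) :
    (translateAnnihilator (c : ℂ) τ L).comap (raisingOp (2 * (c : ℂ)) - algebraMap ℂ _ b) ≤
      translateAnnihilator (c : ℂ) τ L := by
  intro p hp
  let W : ℂ → ℂ := fun z ↦ L (polyGauss (c : ℂ) τ z p)
  have hode (z : ℂ) : HasDerivAt W (b • W z) z := by
    refine (hasDerivAt_apply_polyGauss (c : ℂ) τ L p z).congr_deriv (sub_eq_zero.1 ?_)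
    simpa [W, Module.algebraMap_end_apply] using mem_translateAnnihilator.1 hp z
  have hW (z : ℂ) : W z = Complex.exp (b * z) * W 0 := eq_cexp_smul_of_forall_hasDerivAt hode z
  obtain ⟨C, hC⟩ := exists_norm_cexp_mul_apply_polyGauss_le c hτ L p
  have hC0 : 0 ≤ C := by simpa using (norm_nonneg _).trans (hC 0)
  have hW0 : ‖W 0‖ ≤ 0 := by
    refine nonpos_of_mul_norm_cexp_quadratic_le (b := b) (Complex.ofReal_ne_zero.2 hc)
      (C := C) (k := 2 * |c| * ‖τ‖) (d := p.natDegree) fun z ↦ ?_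
    calc ‖W 0‖ * ‖Complex.exp (b * z + c * z ^ 2)‖ = ‖Complex.exp (c * z ^ 2) * W z‖ := by
          rw [hW z, Complex.exp_add, norm_mul, norm_mul, norm_mul]
          ring
      _ ≤ C * (1 + ‖z‖) ^ p.natDegree * Real.exp (2 * |c| * ‖τ‖ * |z.re|) := hC z
      _ ≤ C * (1 + ‖z‖) ^ p.natDegree * Real.exp (2 * |c| * ‖τ‖ * ‖z‖) := by
          gcongr
          exact Complex.abs_re_le_norm z
  exact mem_translateAnnihilator.2 fun z ↦ by
    simpa [norm_le_zero_iff.1 hW0] using hW z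

theorem translateAnnihilator_eq_top (hc : c ≠ 0) (hτ : IsSelfAdjoint τ) (hq : q ≠ 0)
    (hqL : q ∈ translateAnnihilator (c : ℂ) τ L) : translateAnnihilator (c : ℂ) τ L = ⊤ :=
  eq_top_of_le_comap_raisingOp_of_comap_le (mul_ne_zero two_ne_zero (Complex.ofReal_ne_zero.2 hc))
    (translateAnnihilator_le_comap_raisingOp _ τ L)
    (comap_raisingOp_sub_le_translateAnnihilator hc hτ L) hq hqL

theorem eq_zero_of_translateAnnihilator_eq_top {c : ℂ} (hgen : Algebra.elemental ℂ τ = ⊤)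
    (h : translateAnnihilator c τ L = ⊤) : L = 0 := by
  let : NormedAlgebra ℚ 𝔸 := .restrictScalars ℚ ℂ 𝔸
  let g := NormedSpace.exp (-c • τ ^ 2)
  have hadjoin : ∀ y ∈ Algebra.adjoin ℂ {τ}, L (y * g) = 0 := by
    rw [Algebra.adjoin_singleton_eq_range_aeval]
    rintro _ ⟨p, rfl⟩
    have hp : p ∈ translateAnnihilator c τ L := h ▸ Submodule.mem_top
    have hLp := mem_translateAnnihilator.1 hp 0
    rwa [polyGauss_apply, map_zero, sub_zero] at hLp
  have hclosed : IsClosed {y | L (y * g) = 0} := isClosed_eq (by fun_prop) continuous_const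
  have hall (y : 𝔸) : L (y * g) = 0 :=
    closure_minimal hadjoin hclosed (hgen ▸ Algebra.mem_top : y ∈ Algebra.elemental ℂ τ)
  ext y
  have hunit : y * NormedSpace.exp (-(-c • τ ^ 2)) * g = y := by
    rw [mul_assoc, ← NormedSpace.exp_add, neg_add_cancel, NormedSpace.exp_zero, mul_one]
  rw [← hunit, hall, zero_apply]

theorem topologicalClosure_span_polyGauss_eq_top (hc : c ≠ 0) (hτ : IsSelfAdjoint τ)
    (hgen : Algebra.elemental ℂ τ = ⊤) (hq : q ≠ 0) {ι : Type*} {lam : ι → ℝ}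
    (hinj : Function.Injective lam) (hdiv : ¬ Summable fun i ↦ |lam i|⁻¹) :
    (Submodule.span ℂ (Set.range fun i ↦ polyGauss (c : ℂ) τ (lam i) q)).topologicalClosure = ⊤ :=
  topologicalClosure_eq_top_of_forall_dual fun _ hL ↦
    eq_zero_of_translateAnnihilator_eq_top hgen <| translateAnnihilator_eq_top hc hτ hq <|
      mem_translateAnnihilator_of_not_summable hτ hinj hdiv fun i ↦
        hL _ (Submodule.subset_span ⟨i, rfl⟩)

end Density

section ContinuousFunctions

theorem elemental_eq_top_of_isSelfAdjoint_of_injective {X 𝕜 : Type*} [TopologicalSpace X]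
    [CompactSpace X] [RCLike 𝕜] {τ : C(X, 𝕜)} (hτ : IsSelfAdjoint τ)
    (hinj : Function.Injective τ) : Algebra.elemental 𝕜 τ = ⊤ := by
  let A : StarSubalgebra 𝕜 C(X, 𝕜) := StarAlgebra.adjoin 𝕜 {τ}
  have hAτ : A.toSubalgebra = Algebra.adjoin 𝕜 {τ} := by
    rw [StarAlgebra.adjoin_toSubalgebra, Set.star_singleton, hτ.star_eq, Set.union_self]
  have hsep : A.SeparatesPoints := fun x y hxy ↦
    ⟨τ, ⟨τ, StarAlgebra.self_mem_adjoin_singleton 𝕜 τ, rfl⟩, hinj.ne hxy⟩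
  rw [Algebra.elemental, ← hAτ, ← StarSubalgebra.topologicalClosure_toSubalgebra_comm,
    ContinuousMap.starSubalgebra_topologicalClosure_eq_top_of_separatesPoints A hsep,
    StarSubalgebra.top_toSubalgebra]

theorem continuousMap_exp_apply {X : Type*} [TopologicalSpace X] [CompactSpace X] (f : C(X, ℂ))
    (x : X) :
    NormedSpace.exp f x = Complex.exp (f x) := by
  rw [Complex.exp_eq_exp_ℂ]
  exact NormedSpace.map_exp (ContinuousMap.evalAlgHom ℂ ℂ x) (continuous_eval_const x) f

theorem polyGauss_apply_apply {X : Type*} [TopologicalSpace X] [CompactSpace X] (c : ℂ)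
    (τ : C(X, ℂ)) (z : ℂ) (p : ℂ[X]) (x : X) :
    polyGauss c τ z p x = p.eval (τ x - z) * Complex.exp (-c * (τ x - z) ^ 2) := by
  simp [polyGauss_apply, continuousMap_exp_apply]

end ContinuousFunctions

/-- A vanishing `lam i` contributes `|0|⁻¹ = 0` to the sum, as if it were left out. -/
theorem poly_gaussian_translates_complete_general {q : ℂ[X]} (hq : q ≠ 0) {c : ℝ} (hc : c ≠ 0)
    {K : Set ℝ} (hK : IsCompact K) {ι : Type*} {lam : ι → ℝ} (hinj : Function.Injective lam)
    (hdiv : ¬ Summable fun i ↦ |lam i|⁻¹) {g : ℝ → ℂ} (hg : ContinuousOn g K) {ε : ℝ}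
    (hε : 0 < ε) :
    ∃ h ∈ Submodule.span ℂ (Set.range fun i ↦ fun t : ℝ ↦
        q.eval ((t : ℂ) - lam i) * Complex.exp (-(c : ℂ) * ((t : ℂ) - lam i) ^ 2)),
      ∀ t ∈ K, ‖g t - h t‖ ≤ ε := by
  have : CompactSpace K := isCompact_iff_compactSpace.1 hK
  let τ : C(K, ℂ) := ⟨fun t ↦ (t : ℝ), by fun_prop⟩
  have hτ : IsSelfAdjoint τ := ContinuousMap.ext fun t ↦ Complex.conj_ofReal t
  have hgen : Algebra.elemental ℂ τ = ⊤ := elemental_eq_top_of_isSelfAdjoint_of_injective hτ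
    (Complex.ofReal_injective.comp Subtype.val_injective)
  let g' : C(K, ℂ) := ⟨K.domRestrict g, continuousOn_iff_continuous_domRestrict.1 hg⟩
  have hg' : g' ∈ (Submodule.span ℂ (Set.range fun i ↦
      polyGauss (c : ℂ) τ (lam i) q)).topologicalClosure :=
    topologicalClosure_span_polyGauss_eq_top hc hτ hgen hq hinj hdiv ▸ Submodule.mem_top
  obtain ⟨f, hf, hdist⟩ := Metric.mem_closure_iff.1 hg' ε hε
  obtain ⟨a, rfl⟩ := Finsupp.mem_span_range_iff_exists_finsupp.1 hf
  refine ⟨_, Finsupp.mem_span_range_iff_exists_finsupp.2 ⟨a, rfl⟩, fun t ht ↦ ?_⟩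
  have hdist_t := (ContinuousMap.dist_apply_le_dist (⟨t, ht⟩ : K)).trans hdist.le
  simpa [dist_eq_norm, Finsupp.sum, polyGauss_apply_apply, g', τ] using hdist_t

theorem poly_gaussian_translates_complete (q : Polynomial ℂ) (hq : q ≠ 0)
    (c : ℝ) (hc : 0 < c) (A B : ℝ) (hAB : A ≤ B)
    (lam : ℕ → ℝ) (hinj : Function.Injective lam)
    (hdiv : ¬ Summable (fun n => if lam n ≠ 0 then 1 / |lam n| else 0)) :
    ∀ (g : ℝ → ℂ), ContinuousOn g (Set.Icc A B) → ∀ ε > 0,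
      ∃ h ∈ Submodule.span ℂ (Set.range fun n : ℕ =>
          fun t : ℝ => q.eval ((t : ℂ) - lam n) *
            Complex.exp (-(c : ℂ) * ((t : ℂ) - lam n) ^ 2)),
        ∀ t ∈ Set.Icc A B, ‖g t - h t‖ ≤ ε := by
  have hdiv' : ¬ Summable fun n ↦ |lam n|⁻¹ := by
    convert hdiv with n
    split_ifs with h <;> simp_all
  exact fun _ hg _ hε ↦
    poly_gaussian_translates_complete_general hq hc.ne' isCompact_Icc hinj hdiv' hg hε
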